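/- (Wedderburn's theorem) Let K be a division ring with center F, and let a ∈ K be algebraic over F with minimal polynomial f ∈ F[t] of degree n. Then, viewed in K[t], f = (t−c_1)···(t−c_n) for some c_1,…,c_n ∈ K each of which is conjugate to a in K (i.e. c_i = d·a·d⁻¹ for some d ∈ K*); moreover f is the minimal polynomial of the conjugacy class Δ(a) = {c·a·c⁻¹ : c ∈ K*}, i.e. f is the monic generator of the left ideal of all polynomials in K[t] vanishing on Δ(a). -/

import Mathlib

/-!
Two facts about evaluation in `K[X]` (coefficients on the left) drive the argument: the product
formula `(q p)(x) = q(y x y⁻¹) y` with `y = p(x)`, and the remainder theorem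
`g = q (X - x) + g(x)`.

Minimality (`natDegree_le_of_vanish`). Let `g` be monic of least degree among the nonzero
polynomials vanishing on the conjugacy class of `a`. For `u ≠ 0` the polynomial `u g u⁻¹` is again
monic of the same degree and vanishes on the class, so `u g u⁻¹ - g`, being of smaller degree, is
zero. Hence `g` has central coefficients and `deg f ≤ deg g`. As `f` is central in `K[X]`, dividing
by `f` then shows that `f` generates the left ideal of polynomials vanishing on the class.

Factorization (`exists_partial_factorization`). Suppose `f = g p` where `p` is a product of `k < n`
factors `X - c`, each `c` conjugate to `a`. By minimality some conjugate `x` of `a` has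
`y = p(x) ≠ 0`; the product formula gives `g(y x y⁻¹) = 0`, so `X - y x y⁻¹` splits off `g` on the
right.
-/

open Polynomial

/-- `f` is the minimal polynomial of `Δ`: the monic generator of the left ideal of
polynomials vanishing on `Δ`. -/
def IsMinPolyOf {K : Type*} [DivisionRing K] (Δ : Set K) (f : K[X]) : Prop :=
  f.Monic ∧ ∀ g : K[X], (∀ a ∈ Δ, g.eval a = 0) ↔ ∃ q : K[X], g = q * f

/-- The product formula for evaluation over a division ring. It also holds when `p.eval x = 0`,
both sides then being zero. -/
lemma eval_mul_conj {K : Type*} [DivisionRing K] (q p : K[X]) (x : K) :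
    (q * p).eval x = q.eval (p.eval x * x * (p.eval x)⁻¹) * p.eval x := by
  induction q using Polynomial.induction_on' with
  | add q₁ q₂ h₁ h₂ => rw [add_mul, eval_add, eval_add, add_mul, h₁, h₂]
  | monomial n b =>
    rw [← C_mul_X_pow_eq_monomial, mul_assoc, X_pow_mul, eval_C_mul, eval_mul_X_pow,
      eval_C_mul, eval_X_pow, mul_assoc]
    by_cases hy : p.eval x = 0
    · simp [hy]
    · have h : SemiconjBy (p.eval x) x (p.eval x * x * (p.eval x)⁻¹) :=
        (inv_mul_cancel_right₀ hy _).symm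
      rw [(h.pow_right n).eq]

/-- The remainder theorem for division by `X - C x` on the right. -/
lemma exists_eq_mul_X_sub_C_add {K : Type*} [DivisionRing K] (g : K[X]) (x : K) :
    ∃ q : K[X], g = q * (X - C x) + C (g.eval x) := by
  induction g using Polynomial.induction_on with
  | C b => exact ⟨0, by simp⟩
  | add p q hp hq =>
    obtain ⟨p', hp⟩ := hp
    obtain ⟨q', hq⟩ := hq
    refine ⟨p' + q', ?_⟩
    rw [eval_add, C_add, add_mul]
    nth_rewrite 1 [hp, hq]
    abel
  | monomial n b h =>
    obtain ⟨q, h⟩ := h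
    set e := (C b * X ^ n : K[X]).eval x with he
    refine ⟨q * X + C e, ?_⟩
    have hX : (X - C x) * X = X * (X - C x) := by rw [sub_mul, mul_sub, X_mul_C]
    rw [pow_succ, ← mul_assoc, eval_mul_X, ← he, h, add_mul, add_mul, mul_assoc, hX,
      ← mul_assoc, mul_sub (C e), C_mul]
    abel

lemma commute_of_central {K : Type*} [DivisionRing K] {f : K[X]}
    (hc : ∀ i, f.coeff i ∈ Subring.center K) (q : K[X]) : q * f = f * q := by
  have hC : ∀ b : K, C b * f = f * C b := fun b => by
    ext i
    rw [coeff_C_mul, coeff_mul_C]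
    exact Subring.mem_center_iff.1 (hc i) b
  induction q using Polynomial.induction_on' with
  | add q₁ q₂ h₁ h₂ => rw [add_mul, mul_add, h₁, h₂]
  | monomial n b =>
    rw [← C_mul_X_pow_eq_monomial, mul_assoc, X_pow_mul, ← mul_assoc, hC, mul_assoc]

lemma eval_conj_of_central {K : Type*} [DivisionRing K] {f : K[X]} {a : K}
    (hc : ∀ i, f.coeff i ∈ Subring.center K) (hroot : f.eval a = 0) {d : K} (hd : d ≠ 0) :
    f.eval (d * a * d⁻¹) = 0 := by
  -- Evaluate both sides of `C d * f = f * C d` at `a`.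
  have h := congrArg (eval a) (commute_of_central hc (C d))
  rw [eval_mul_conj f, eval_C_mul, hroot, mul_zero, eval_C] at h
  exact (mul_eq_zero.1 h.symm).resolve_right hd

/-- If `deg f` bounds from below the degrees of the nonzero polynomials with central coefficients
that vanish at `a`, then it also does so for the nonzero polynomials, with arbitrary coefficients,
that vanish on the whole conjugacy class of `a`. -/
lemma natDegree_le_of_vanish {K : Type*} [DivisionRing K] {a : K} {f : K[X]}
    (hmin : ∀ g : K[X], g ≠ 0 → (∀ i, g.coeff i ∈ Subring.center K) →
      g.eval a = 0 → f.natDegree ≤ g.natDegree) (g : K[X]) (hg : g ≠ 0)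
    (hv : ∀ d : K, d ≠ 0 → g.eval (d * a * d⁻¹) = 0) : f.natDegree ≤ g.natDegree := by
  induction hN : g.natDegree using Nat.strong_induction_on generalizing g with
  | _ N ih =>
  subst hN
  by_contra hlt
  have hlc : g.leadingCoeff ≠ 0 := leadingCoeff_ne_zero.2 hg
  set m : K[X] := C g.leadingCoeff⁻¹ * g with hm
  have hmdeg : m.natDegree = g.natDegree := natDegree_C_mul (inv_ne_zero hlc)
  have hmmonic : m.Monic := by
    rw [Monic, hm, leadingCoeff_mul, leadingCoeff_C, inv_mul_cancel₀ hlc]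
  have hmv : ∀ d : K, d ≠ 0 → m.eval (d * a * d⁻¹) = 0 := fun d hd => by
    rw [hm, eval_C_mul, hv d hd, mul_zero]
  have hconj : ∀ u : K, u ≠ 0 → C u * m * C u⁻¹ = m := fun u hu => by
    have hm0 : m ≠ 0 := hmmonic.ne_zero
    by_contra hne
    have hr : C u * m * C u⁻¹ - m ≠ 0 := sub_ne_zero.2 hne
    have hd : (C u * m * C u⁻¹ - m).degree < (C u * m * C u⁻¹).degree := by
      refine degree_sub_lt_left ?_ ?_ ?_
      · rw [degree_mul, degree_mul, degree_C hu, degree_C (inv_ne_zero hu), zero_add, add_zero]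
      · simp [hu, hm0]
      · rw [leadingCoeff_mul, leadingCoeff_mul, hmmonic.leadingCoeff]
        simp [hu]
    rw [degree_mul, degree_mul, degree_C hu, degree_C (inv_ne_zero hu), zero_add, add_zero] at hd
    have hd' := natDegree_lt_natDegree hr hd
    rw [hmdeg] at hd'
    refine hlt ((ih _ hd' _ hr (fun d hd0 => ?_) rfl).trans hd'.le)
    have hx : u⁻¹ * (d * a * d⁻¹) * u⁻¹⁻¹ = (u⁻¹ * d) * a * (u⁻¹ * d)⁻¹ := by
      simp only [mul_inv_rev, mul_assoc]
    rw [eval_sub, eval_mul_conj, eval_C, eval_C_mul, hmv d hd0, hx,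
      hmv _ (mul_ne_zero (inv_ne_zero hu) hd0)]
    simp
  refine hlt (hmdeg ▸ hmin m hmmonic.ne_zero (fun i => ?_) ?_)
  · rw [Subring.mem_center_iff]
    intro u
    by_cases hu : u = 0
    · simp [hu]
    · have h := congrArg (fun p => coeff p i) (hconj u hu)
      simp only [coeff_mul_C, coeff_C_mul] at h
      exact (mul_inv_eq_iff_eq_mul₀ hu).1 h
  · simpa using hmv 1 one_ne_zero

/-- For each `k ≤ deg f`, a product of `k` factors `X - C c` with `c` conjugate to `a` splits off
`f` on the right. -/
lemma exists_partial_factorization {K : Type*} [DivisionRing K] {a : K} {f : K[X]}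
    (hmonic : f.Monic) (hcentral : ∀ i, f.coeff i ∈ Subring.center K) (hroot : f.eval a = 0)
    (hmin : ∀ g : K[X], g ≠ 0 → (∀ i, g.coeff i ∈ Subring.center K) →
      g.eval a = 0 → f.natDegree ≤ g.natDegree) (k : ℕ) (hk : k ≤ f.natDegree) :
    ∃ (l : List K) (g : K[X]), l.length = k ∧ (∀ c ∈ l, ∃ d : K, d ≠ 0 ∧ c = d * a * d⁻¹) ∧
      g.Monic ∧ (l.map fun c => X - C c).prod.natDegree = k ∧
      f = g * (l.map fun c => X - C c).prod := by
  induction k with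
  | zero => exact ⟨[], f, by simp [hmonic]⟩
  | succ k ih =>
    obtain ⟨l, g, hl, hconj, hg, hdeg, hf⟩ := ih (by omega)
    set p : K[X] := (l.map fun c => X - C c).prod with hp
    have hp0 : p ≠ 0 := by
      rintro h
      rw [h, mul_zero] at hf
      exact hmonic.ne_zero hf
    obtain ⟨d, hd, hy⟩ : ∃ d : K, d ≠ 0 ∧ p.eval (d * a * d⁻¹) ≠ 0 := by
      by_contra! h
      have := natDegree_le_of_vanish hmin p hp0 h
      omega
    set y := p.eval (d * a * d⁻¹) with hydef
    set x := y * (d * a * d⁻¹) * y⁻¹ with hx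
    have hgx : g.eval x = 0 := by
      have h := eval_conj_of_central hcentral hroot hd
      rw [hf, eval_mul_conj] at h
      exact (mul_eq_zero.1 h).resolve_right hy
    obtain ⟨q, hq⟩ := exists_eq_mul_X_sub_C_add g x
    rw [hgx, C_0, add_zero] at hq
    refine ⟨x :: l, q, by simp [hl], ?_, ?_, ?_, ?_⟩
    · intro c hc
      rcases List.mem_cons.1 hc with rfl | hc
      · exact ⟨y * d, mul_ne_zero hy hd, by simp only [hx, mul_inv_rev, mul_assoc]⟩
      · exact hconj c hc
    · rw [hq] at hg
      exact (monic_X_sub_C x).of_mul_monic_right hg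
    · rw [List.map_cons, List.prod_cons, ← hp, natDegree_mul (X_sub_C_ne_zero x) hp0,
        natDegree_X_sub_C, hdeg, add_comm]
    · rw [List.map_cons, List.prod_cons, ← hp, ← mul_assoc, ← hq, hf]

/-- **Wedderburn's theorem.** If `a ∈ K` is algebraic over the center `F` of `K` with
minimal polynomial `f ∈ F[t]` of degree `n`, then over `K[t]` one has
`f = (t−c₁)⋯(t−cₙ)` with each `cᵢ` conjugate to `a`, and `f` is the minimal polynomial
of the conjugacy class `Δ(a)`. -/
theorem stmt5 {K : Type*} [DivisionRing K] (a : K) (f : K[X]) (n : ℕ)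
    (hmonic : f.Monic)
    (hcentral : ∀ i, f.coeff i ∈ Subring.center K)
    (hroot : f.eval a = 0)
    (hmin : ∀ g : K[X], g ≠ 0 → (∀ i, g.coeff i ∈ Subring.center K) →
      g.eval a = 0 → f.natDegree ≤ g.natDegree)
    (hdeg : f.natDegree = n) :
    (∃ c : Fin n → K,
      (∀ i, ∃ d : K, d ≠ 0 ∧ c i = d * a * d⁻¹) ∧
      f = (List.ofFn fun i => X - C (c i)).prod) ∧
    IsMinPolyOf {x : K | ∃ d : K, d ≠ 0 ∧ x = d * a * d⁻¹} f := by
  subst hdeg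
  refine ⟨?_, hmonic, fun g => ⟨fun hg => ?_, ?_⟩⟩
  · obtain ⟨l, g, hl, hconj, hg, hdeg, hf⟩ :=
      exists_partial_factorization hmonic hcentral hroot hmin f.natDegree le_rfl
    have hp0 : (l.map fun c => X - C c).prod ≠ 0 := fun h => by
      rw [h, mul_zero] at hf
      exact hmonic.ne_zero hf
    have hg1 : g = 1 := by
      have h := congrArg natDegree hf
      rw [natDegree_mul hg.ne_zero hp0, hdeg] at h
      exact hg.natDegree_eq_zero.1 (by omega)
    refine ⟨fun i => l.get (i.cast hl.symm), fun i => hconj _ (List.get_mem _ _), ?_⟩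
    have hlist : (List.ofFn fun i : Fin f.natDegree => X - C (l.get (i.cast hl.symm))) =
        l.map fun c => X - C c := by
      apply List.ext_get <;> simp [hl]
    rw [hlist]
    rwa [hg1, one_mul] at hf
  · refine ⟨g /ₘ f, ?_⟩
    have hdiv := modByMonic_add_div g f
    rw [← commute_of_central hcentral] at hdiv
    have hr : g %ₘ f = 0 := by
      by_contra hr
      have hle := natDegree_le_of_vanish hmin _ hr (fun d hd => by
        have h := congrArg (eval (d * a * d⁻¹)) hdiv
        rwa [hg _ ⟨d, hd, rfl⟩, eval_add, eval_mul_conj,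
          eval_conj_of_central hcentral hroot hd, mul_zero, add_zero] at h)
      exact absurd (natDegree_lt_natDegree hr (degree_modByMonic_lt g hmonic)) (by omega)
    rw [hr, zero_add] at hdiv
    exact hdiv.symm
  · rintro ⟨q, rfl⟩ _ ⟨d, hd, rfl⟩
    rw [eval_mul_conj, eval_conj_of_central hcentral hroot hd, mul_zero]
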